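/- Let ω, ξ : ℤ → ℝ, let σ ∈ ℝ with 0 < σ ≤ 1, |ω(j)| ≤ σ for all j, and |ξ(j)| ≤ (1/2)(|ω(j)| − ω(j)²) for all j. Let μ > 0 and set Re = σ/μ; assume σ ≤ Re/(Re + 4). Define a(j) = ω(j) + ξ(j), C⁺(j) = (1/2)(|a(j)| − a(j)) + μ and C⁻(j) = (1/2)(|a(j)| + a(j)) + μ. Then for every j one has C⁺(j) ≥ 0, C⁻(j) ≥ 0 and C⁺(j) + C⁻(j) ≤ 1. Consequently, for any grid function u : ℤ → ℝ with summable differences, the scheme w(j) = u(j) + C⁺(j)(u(j+1) − u(j)) − C⁻(j−1)(u(j) − u(j−1)) satisfies ∑_{j∈ℤ} |w(j+1) − w(j)| ≤ ∑_{j∈ℤ} |u(j+1) − u(j)|. -/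

import Mathlib

/-- Bihari's TVD theorem for the second-order scheme for a viscous conservation law:
under Harten's second-order limiter bound and the CFL condition `σ ≤ Re/(Re+4)`
with `Re = σ/μ`, the incremental coefficients are nonnegative with sum at most 1,
and consequently the scheme is total-variation diminishing. -/
theorem bihari_tvd (ω ξ : ℤ → ℝ) (σ μ : ℝ)
    (hσ0 : 0 < σ) (hσ1 : σ ≤ 1)
    (hω : ∀ j : ℤ, |ω j| ≤ σ)
    (hξ : ∀ j : ℤ, |ξ j| ≤ (1 / 2) * (|ω j| - (ω j) ^ 2))
    (hμ : 0 < μ)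
    (hcfl : σ ≤ (σ / μ) / (σ / μ + 4))
    (a Cp Cm : ℤ → ℝ)
    (ha : ∀ j : ℤ, a j = ω j + ξ j)
    (hCp : ∀ j : ℤ, Cp j = (1 / 2) * (|a j| - a j) + μ)
    (hCm : ∀ j : ℤ, Cm j = (1 / 2) * (|a j| + a j) + μ) :
    (∀ j : ℤ, 0 ≤ Cp j ∧ 0 ≤ Cm j ∧ Cp j + Cm j ≤ 1) ∧
      ∀ u w : ℤ → ℝ, Summable (fun j : ℤ => |u (j + 1) - u j|) →
        (∀ j : ℤ, w j = u j + Cp j * (u (j + 1) - u j) - Cm (j - 1) * (u j - u (j - 1))) →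
        (∑' j : ℤ, |w (j + 1) - w j|) ≤ ∑' j : ℤ, |u (j + 1) - u j| := by
  have hs : σ + 4 * μ ≤ 1 := by
    have e : (σ / μ) / (σ / μ + 4) = σ / (σ + 4 * μ) := by
      field_simp
    have hp : 0 < σ + 4 * μ := by positivity
    rw [e, le_div_iff₀ hp] at hcfl
    by_contra h
    push Not at h
    nlinarith [mul_pos hσ0 (sub_pos.mpr h)]
  have key : ∀ j : ℤ, 0 ≤ Cp j ∧ 0 ≤ Cm j ∧ Cp j + Cm j ≤ 1 := by
    intro j
    refine ⟨?_, ?_, ?_⟩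
    · rw [hCp]; linarith [le_abs_self (a j)]
    · rw [hCm]; linarith [neg_abs_le (a j)]
    · rw [hCp, hCm]
      have h1 : |a j| ≤ |ω j| + |ξ j| := by rw [ha]; exact abs_add_le _ _
      have h2 := hξ j
      have h3 := hω j
      rw [← sq_abs (ω j)] at h2
      nlinarith [mul_nonneg (sub_nonneg.mpr h3) (by linarith : 0 ≤ 3 - σ - |ω j|),
        sq_nonneg (1 - σ)]
  refine ⟨key, ?_⟩
  intro u w hu hw
  have hF : Summable (fun j : ℤ => Cp j * |u (j + 1) - u j|) := by
    refine Summable.of_nonneg_of_le (fun j => mul_nonneg (key j).1 (abs_nonneg _)) (fun j => ?_) hu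
    obtain ⟨h1, h2, h3⟩ := key j
    exact mul_le_of_le_one_left (abs_nonneg _) (by linarith)
  have hG : Summable (fun j : ℤ => Cm j * |u (j + 1) - u j|) := by
    refine Summable.of_nonneg_of_le (fun j => mul_nonneg (key j).2.1 (abs_nonneg _)) (fun j => ?_) hu
    obtain ⟨h1, h2, h3⟩ := key j
    exact mul_le_of_le_one_left (abs_nonneg _) (by linarith)
  have hF' := (Equiv.addRight (1 : ℤ)).hasSum_iff.mpr hF.hasSum
  have hG' := (Equiv.subRight (1 : ℤ)).hasSum_iff.mpr hG.hasSum
  have hT := (((hu.hasSum.sub hF.hasSum).sub hG.hasSum).add hF').add hG'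
  have hb : ∀ j : ℤ, |w (j + 1) - w j| ≤
      |u (j + 1) - u j| - Cp j * |u (j + 1) - u j| - Cm j * |u (j + 1) - u j|
        + Cp (j + 1) * |u (j + 1 + 1) - u (j + 1)|
        + Cm (j - 1) * |u (j - 1 + 1) - u (j - 1)| := by
    intro j
    have e : w (j + 1) - w j = (1 - Cp j - Cm j) * (u (j + 1) - u j)
        + Cp (j + 1) * (u (j + 1 + 1) - u (j + 1))
        + Cm (j - 1) * (u (j - 1 + 1) - u (j - 1)) := by
      rw [hw (j + 1), hw j, add_sub_cancel_right, sub_add_cancel]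
      ring
    rw [e]
    refine (abs_add_three _ _ _).trans (le_of_eq ?_)
    rw [abs_mul, abs_mul, abs_mul, abs_of_nonneg (key (j + 1)).1, abs_of_nonneg (key (j - 1)).2.1,
      abs_of_nonneg (by linarith [(key j).2.2] : 0 ≤ 1 - Cp j - Cm j)]
    ring
  have hW : Summable (fun j : ℤ => |w (j + 1) - w j|) :=
    Summable.of_nonneg_of_le (fun j => abs_nonneg _) hb hT.summable
  have := hasSum_le hb hW.hasSum hT
  linarith
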